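/- arXiv:math/9806003 — 8 statements merged into one kernel-verified Lean document; each statement's English description precedes it below -/
import Mathlib

section
/- Let l₁,l₂,l₃,g₁,g₂,g₃ : ℝ → ℝ be differentiable functions satisfying the Kowalewski equations of motion: l₁' = l₂l₃, l₂' = −l₁l₃ − g₃, l₃' = g₂, g₁' = 2g₂l₃ − g₃l₂, g₂' = g₃l₁ − 2g₁l₃, g₃' = g₁l₂ − g₂l₁. Set K₁(t) = l₁(t)² − l₂(t)² + 2g₁(t) and K₂(t) = l₁(t)l₂(t) + g₂(t). Then at every t one has K₁'(t) = 4 l₃(t) K₂(t) and K₂'(t) = − l₃(t) K₁(t). -/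
/-- With `K₁ = l₁² − l₂² + 2g₁` and `K₂ = l₁l₂ + g₂`, the Kowalewski
equations of motion imply `K₁' = 4 l₃ K₂` and `K₂' = − l₃ K₁`. -/
theorem kowalewski_K_system
    (l₁ l₂ l₃ g₁ g₂ g₃ : ℝ → ℝ)
    (hl₁ : Differentiable ℝ l₁) (hl₂ : Differentiable ℝ l₂)
    (hl₃ : Differentiable ℝ l₃) (hg₁ : Differentiable ℝ g₁)
    (hg₂ : Differentiable ℝ g₂) (hg₃ : Differentiable ℝ g₃)
    (hdl₁ : ∀ t, deriv l₁ t = l₂ t * l₃ t)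
    (hdl₂ : ∀ t, deriv l₂ t = -(l₁ t * l₃ t) - g₃ t)
    (hdl₃ : ∀ t, deriv l₃ t = g₂ t)
    (hdg₁ : ∀ t, deriv g₁ t = 2 * g₂ t * l₃ t - g₃ t * l₂ t)
    (hdg₂ : ∀ t, deriv g₂ t = g₃ t * l₁ t - 2 * g₁ t * l₃ t)
    (hdg₃ : ∀ t, deriv g₃ t = g₁ t * l₂ t - g₂ t * l₁ t) :
    (∀ t, deriv (fun s => l₁ s ^ 2 - l₂ s ^ 2 + 2 * g₁ s) t
        = 4 * l₃ t * (l₁ t * l₂ t + g₂ t)) ∧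
    (∀ t, deriv (fun s => l₁ s * l₂ s + g₂ s) t
        = - l₃ t * (l₁ t ^ 2 - l₂ t ^ 2 + 2 * g₁ t)) := by
  have a := fun t => (hl₁ t).hasDerivAt
  have b := fun t => (hl₂ t).hasDerivAt
  have c := fun t => (hg₁ t).hasDerivAt
  have d := fun t => (hg₂ t).hasDerivAt
  constructor
  · intro t
    have h := ((((a t).fun_pow 2).fun_sub ((b t).fun_pow 2)).fun_add ((c t).const_mul 2)).deriv
    rw [h, hdl₁, hdl₂, hdg₁]
    push_cast
    ring
  · intro t
    have h := (((a t).fun_mul (b t)).fun_add (d t)).deriv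
    rw [h, hdl₁, hdl₂, hdg₂]
    ring
end

section
/- Let l₁,l₂,l₃,g₁,g₂,g₃ : ℝ → ℝ be differentiable functions satisfying the Kowalewski equations of motion: l₁' = l₂l₃, l₂' = −l₁l₃ − g₃, l₃' = g₂, g₁' = 2g₂l₃ − g₃l₂, g₂' = g₃l₁ − 2g₁l₃, g₃' = g₁l₂ − g₂l₁. Then Kowalewski's integral I₂(t) = (l₁(t)² − l₂(t)² + 2g₁(t))² + 4(l₁(t)l₂(t) + g₂(t))² has derivative zero at every t; in particular I₂ is constant along solutions. -/
/-- Kowalewski's integral `I₂ = (l₁² − l₂² + 2g₁)² + 4(l₁l₂ + g₂)²` is conserved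
along solutions of the Kowalewski equations of motion. -/
theorem kowalewski_integral_I₂_conserved
    (l₁ l₂ l₃ g₁ g₂ g₃ : ℝ → ℝ)
    (hl₁ : Differentiable ℝ l₁) (hl₂ : Differentiable ℝ l₂)
    (hl₃ : Differentiable ℝ l₃) (hg₁ : Differentiable ℝ g₁)
    (hg₂ : Differentiable ℝ g₂) (hg₃ : Differentiable ℝ g₃)
    (hdl₁ : ∀ t, deriv l₁ t = l₂ t * l₃ t)
    (hdl₂ : ∀ t, deriv l₂ t = -(l₁ t * l₃ t) - g₃ t)
    (hdl₃ : ∀ t, deriv l₃ t = g₂ t)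
    (hdg₁ : ∀ t, deriv g₁ t = 2 * g₂ t * l₃ t - g₃ t * l₂ t)
    (hdg₂ : ∀ t, deriv g₂ t = g₃ t * l₁ t - 2 * g₁ t * l₃ t)
    (hdg₃ : ∀ t, deriv g₃ t = g₁ t * l₂ t - g₂ t * l₁ t) :
    ∀ t, deriv (fun s =>
        (l₁ s ^ 2 - l₂ s ^ 2 + 2 * g₁ s) ^ 2 + 4 * (l₁ s * l₂ s + g₂ s) ^ 2) t = 0 := by
  intro t
  have h1 := (hl₁ t).hasDerivAt
  have h2 := (hl₂ t).hasDerivAt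
  have h4 := (hg₁ t).hasDerivAt
  have h5 := (hg₂ t).hasDerivAt
  rw [hdl₁] at h1
  rw [hdl₂] at h2
  rw [hdg₁] at h4
  rw [hdg₂] at h5
  have h := ((((h1.pow 2).sub (h2.pow 2)).add (h4.const_mul 2)).pow 2).add
    ((((h1.mul h2).add h5).pow 2).const_mul 4)
  refine HasDerivAt.deriv (HasDerivAt.congr_deriv h ?_)
  simp only [Pi.add_apply, Pi.sub_apply, Pi.mul_apply, Pi.pow_apply]
  push_cast
  ring
end

section
/- Let K be a field of characteristic zero (e.g. K = ℂ), let l₁,l₂,l₃,g₁,g₂,g₃ ∈ K satisfy l₁g₁ + l₂g₂ + l₃g₃ = 0 and g₁² + g₂² + g₃² = 1, and set H = (1/2)(l₁² + l₂² + 2l₃²) − g₁ and I₂ = (l₁² − l₂² + 2g₁)² + 4(l₁l₂ + g₂)². Then for every λ ∈ K with λ ≠ 0 and every μ ∈ K, the Lax matrix L(λ) (the explicit 4×4 matrix below) satisfies det(L(λ) − μ·𝟙₄) = μ⁴ − 2·d₁(λ²)·μ² + d₂(λ²), where d₁(z) = z⁻¹ − 2H + 2z and d₂(z) = z⁻² −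 4Hz⁻¹ + I₂. -/
/-- The characteristic polynomial of the Lax matrix of the Kowalewski top:
under the constraints `(l,g) = 0` and `|g|² = 1`, one has
`det(L(λ) − μ·𝟙₄) = μ⁴ − 2 d₁(λ²) μ² + d₂(λ²)`, where
`d₁(z) = z⁻¹ − 2H + 2z` and `d₂(z) = z⁻² − 4Hz⁻¹ + I₂`. -/
theorem kowalewski_lax_spectral_curve
    (K : Type*) [Field K] [CharZero K]
    (l₁ l₂ l₃ g₁ g₂ g₃ : K)
    (horth : l₁ * g₁ + l₂ * g₂ + l₃ * g₃ = 0)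
    (hnorm : g₁ ^ 2 + g₂ ^ 2 + g₃ ^ 2 = 1)
    (H I₂ : K)
    (hH : H = (1/2) * (l₁ ^ 2 + l₂ ^ 2 + 2 * l₃ ^ 2) - g₁)
    (hI₂ : I₂ = (l₁ ^ 2 - l₂ ^ 2 + 2 * g₁) ^ 2 + 4 * (l₁ * l₂ + g₂) ^ 2)
    (lam : K) (hlam : lam ≠ 0) (mu : K)
    (L : Matrix (Fin 4) (Fin 4) K)
    (hL : L = !![g₁ / lam, g₂ / lam, -l₂ + g₃ / lam, -l₁;
                 g₂ / lam, -g₁ / lam, l₁, -l₂ - g₃ / lam;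
                 l₂ + g₃ / lam, -l₁, -2 * lam - g₁ / lam, -2 * l₃ + g₂ / lam;
                 l₁, l₂ - g₃ / lam, 2 * l₃ + g₂ / lam, 2 * lam + g₁ / lam]) :
    (L - mu • (1 : Matrix (Fin 4) (Fin 4) K)).det
      = mu ^ 4 - 2 * ((lam ^ 2)⁻¹ - 2 * H + 2 * lam ^ 2) * mu ^ 2
        + ((lam ^ 2)⁻¹ ^ 2 - 4 * H * (lam ^ 2)⁻¹ + I₂) := by
  subst hL
  have key : (!![g₁ / lam, g₂ / lam, -l₂ + g₃ / lam, -l₁;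
                 g₂ / lam, -g₁ / lam, l₁, -l₂ - g₃ / lam;
                 l₂ + g₃ / lam, -l₁, -2 * lam - g₁ / lam, -2 * l₃ + g₂ / lam;
                 l₁, l₂ - g₃ / lam, 2 * l₃ + g₂ / lam, 2 * lam + g₁ / lam]
        - mu • (1 : Matrix (Fin 4) (Fin 4) K)).det
      = mu ^ 4 - 2 * ((g₁ ^ 2 + g₂ ^ 2 + g₃ ^ 2) * (lam ^ 2)⁻¹ - 2 * H + 2 * lam ^ 2) * mu ^ 2
        + ((g₁ ^ 2 + g₂ ^ 2 + g₃ ^ 2) ^ 2 * (lam ^ 2)⁻¹ ^ 2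
          - 4 * (H * (g₁ ^ 2 + g₂ ^ 2 + g₃ ^ 2) - (l₁ * g₁ + l₂ * g₂ + l₃ * g₃) ^ 2)
            * (lam ^ 2)⁻¹ + I₂) := by
    subst hH hI₂
    simp [Matrix.det_succ_row_zero, Fin.sum_univ_succ, Fin.succAbove, Matrix.one_apply]
    field_simp
    ring
  rw [key, horth, hnorm]
  ring
end

section
/- Let K be a field of characteristic zero containing an element s with s² = 2, and let H, I₂ ∈ K. Suppose z, μ ∈ K with z ≠ 0 satisfy the equation of the curve C₂: μ⁴ − 2(z⁻¹ − 2H + 2z)μ² + (z⁻² − 4Hz⁻¹ + I₂) = 0. Define x = (1/2)(μ² − z⁻¹) and u = (μ/s)(x² + 2Hx − 1 + I₂/4). Then x² + 2Hx + I₂/4 = 2xz + 1, and u² = x(x² + 2Hx + I₂/4)(x² + 2Hx − 1 + I₂/4). In other words, the change of variables x = (1/2)(μ² − z⁻¹), u = (μ/√2)(x² + 2Hx − 1 + I₂/4) brings the curve C₂ to the canonical hyperelliptic form u² = x(x² + 2Hx + I₂/4)(x² + 2Hx − 1 + I₂/4). -/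
/-- The change of variables `x = (1/2)(μ² − z⁻¹)`, `u = (μ/√2)(x² + 2Hx − 1 + I₂/4)`
brings the curve `C₂ : μ⁴ − 2(z⁻¹ − 2H + 2z)μ² + (z⁻² − 4Hz⁻¹ + I₂) = 0` to the canonical
hyperelliptic form `u² = x(x² + 2Hx + I₂/4)(x² + 2Hx − 1 + I₂/4)`. -/
theorem C₂_canonical_form
    (K : Type*) [Field K] [CharZero K]
    (s : K) (hs : s ^ 2 = 2)
    (H I₂ : K) (z mu : K) (hz : z ≠ 0)
    (hcurve : mu ^ 4 - 2 * (z⁻¹ - 2 * H + 2 * z) * mu ^ 2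
        + (z⁻¹ ^ 2 - 4 * H * z⁻¹ + I₂) = 0)
    (x u : K)
    (hx : x = (1/2) * (mu ^ 2 - z⁻¹))
    (hu : u = (mu / s) * (x ^ 2 + 2 * H * x - 1 + I₂ / 4)) :
    x ^ 2 + 2 * H * x + I₂ / 4 = 2 * x * z + 1 ∧
    u ^ 2 = x * (x ^ 2 + 2 * H * x + I₂ / 4) * (x ^ 2 + 2 * H * x - 1 + I₂ / 4) := by
  have hw : z * z⁻¹ = 1 := mul_inv_cancel₀ hz
  generalize z⁻¹ = w at *
  have hm : mu ^ 2 = 2 * x + w := by rw [hx]; ring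
  have h1 : x ^ 2 + 2 * H * x + I₂ / 4 = 2 * x * z + 1 := by
    have h4 : mu ^ 4 = (2 * x + w) ^ 2 := by rw [← hm]; ring
    rw [h4, hm] at hcurve
    linear_combination hcurve / 4 + hw
  refine ⟨h1, ?_⟩
  have h2 : x ^ 2 + 2 * H * x - 1 + I₂ / 4 = 2 * x * z := by linear_combination h1
  rw [hu, h1, h2, mul_pow, div_pow, hs, hm]
  linear_combination 2 * x ^ 2 * z * hw
end

section
/- Let R be a commutative ring and let G₁, G₂, G₃ ∈ R[x] be polynomials of degree at most 2, G_j(x) = g_{j2}x² + g_{j1}x + g_{j0}. Let L₁ = [G₂,G₃], L₂ = [G₃,G₁], L₃ = [G₁,G₂], where [G,G̃] := G'G̃ − G G̃', and let Δ be the determinant of the 3×3 matrix whose j-th row is (g_{j0}, g_{j1}, g_{j2}). Then for all x, X ∈ R: G₁(x)L₁(X) + G₂(x)L₂(X) + G₃(x)L₃(X) = −Δ·(x − X)². -/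
/-- The fundamental bilinear identity behind Richelot's construction: if
`G_j(x) = g_{j2}x² + g_{j1}x + g_{j0}` and `L₁ = [G₂,G₃]`, `L₂ = [G₃,G₁]`,
`L₃ = [G₁,G₂]` (with `[G,G̃] = G'G̃ − GG̃'`), and `Δ = det(g_{ij})`, then
`G₁(x)L₁(X) + G₂(x)L₂(X) + G₃(x)L₃(X) = −Δ(x − X)²`. -/
theorem richelot_bilinear_identity
    (R : Type*) [CommRing R]
    (g₁₀ g₁₁ g₁₂ g₂₀ g₂₁ g₂₂ g₃₀ g₃₁ g₃₂ : R)
    (G₁ G₂ G₃ L₁ L₂ L₃ : R → R)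
    (hG₁ : ∀ x, G₁ x = g₁₂ * x ^ 2 + g₁₁ * x + g₁₀)
    (hG₂ : ∀ x, G₂ x = g₂₂ * x ^ 2 + g₂₁ * x + g₂₀)
    (hG₃ : ∀ x, G₃ x = g₃₂ * x ^ 2 + g₃₁ * x + g₃₀)
    (hL₁ : ∀ X, L₁ X = (2 * g₂₂ * X + g₂₁) * G₃ X - G₂ X * (2 * g₃₂ * X + g₃₁))
    (hL₂ : ∀ X, L₂ X = (2 * g₃₂ * X + g₃₁) * G₁ X - G₃ X * (2 * g₁₂ * X + g₁₁))
    (hL₃ : ∀ X, L₃ X = (2 * g₁₂ * X + g₁₁) * G₂ X - G₁ X * (2 * g₂₂ * X + g₂₁))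
    (Δ : R) (hΔ : Δ = Matrix.det !![g₁₀, g₁₁, g₁₂; g₂₀, g₂₁, g₂₂; g₃₀, g₃₁, g₃₂]) :
    ∀ x X : R, G₁ x * L₁ X + G₂ x * L₂ X + G₃ x * L₃ X = -Δ * (x - X) ^ 2 := by
  intro x X
  rw [hΔ, Matrix.det_fin_three]
  simp only [hL₁, hL₂, hL₃, hG₁, hG₂, hG₃]
  simp
  ring
end

section
/- Let K be a field of characteristic zero and let G₁, G₂, G₃ ∈ K[x] be polynomials of degree at most 2, G_j(x) = g_{j2}x² + g_{j1}x + g_{j0}, with L₁ = [G₂,G₃], L₂ = [G₃,G₁], L₃ = [G₁,G₂] (where [G,G̃] := G'G̃ − G G̃') and Δ the determinant of the 3×3 matrix whose j-th row is (g_{j0}, g_{j1}, g_{j2}); assume Δ ≠ 0. Suppose x, y, X, Y ∈ K satisfy y² = G₁(x)G₂(x)G₃(x), Δ·Y² = L₁(X)L₂(X)L₃(X), and the correspondence equation G₁(x)L₁(X) + G₂(x)L₂(X) = 0. Then (yY)² = (G₁(x)L₁(X)(x − X))², i.e. yY = ± G₁(x)L₁(X)(x − X). Hence on the correspondence curve Z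 the second defining equation G₁(x)L₁(X)(x − X) = yY is consistent with the curve equations. -/
/-- Consistency of the second defining equation of Richelot's
(2,2)-correspondence: on the locus `G₁(x)L₁(X) + G₂(x)L₂(X) = 0` of
`C × Ĉ`, one has `(yY)² = (G₁(x)L₁(X)(x − X))²`. -/
theorem richelot_correspondence_consistency
    (K : Type*) [Field K] [CharZero K]
    (g₁₀ g₁₁ g₁₂ g₂₀ g₂₁ g₂₂ g₃₀ g₃₁ g₃₂ : K)
    (G₁ G₂ G₃ L₁ L₂ L₃ : K → K)
    (hG₁ : ∀ x, G₁ x = g₁₂ * x ^ 2 + g₁₁ * x + g₁₀)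
    (hG₂ : ∀ x, G₂ x = g₂₂ * x ^ 2 + g₂₁ * x + g₂₀)
    (hG₃ : ∀ x, G₃ x = g₃₂ * x ^ 2 + g₃₁ * x + g₃₀)
    (hL₁ : ∀ X, L₁ X = (2 * g₂₂ * X + g₂₁) * G₃ X - G₂ X * (2 * g₃₂ * X + g₃₁))
    (hL₂ : ∀ X, L₂ X = (2 * g₃₂ * X + g₃₁) * G₁ X - G₃ X * (2 * g₁₂ * X + g₁₁))
    (hL₃ : ∀ X, L₃ X = (2 * g₁₂ * X + g₁₁) * G₂ X - G₁ X * (2 * g₂₂ * X + g₂₁))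
    (Δ : K) (hΔ : Δ = Matrix.det !![g₁₀, g₁₁, g₁₂; g₂₀, g₂₁, g₂₂; g₃₀, g₃₁, g₃₂])
    (hΔ0 : Δ ≠ 0)
    (x y X Y : K)
    (hC : y ^ 2 = G₁ x * G₂ x * G₃ x)
    (hChat : Δ * Y ^ 2 = L₁ X * L₂ X * L₃ X)
    (hcorr : G₁ x * L₁ X + G₂ x * L₂ X = 0) :
    (y * Y) ^ 2 = (G₁ x * L₁ X * (x - X)) ^ 2 := by
  have key : G₁ x * L₁ X + G₂ x * L₂ X + G₃ x * L₃ X = -(Δ * (x - X) ^ 2) := by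
    rw [hΔ, Matrix.det_fin_three]
    simp only [hL₁, hL₂, hL₃, hG₁, hG₂, hG₃]
    simp
    ring
  have h3 : G₃ x * L₃ X = -(Δ * (x - X) ^ 2) := by linear_combination key - hcorr
  apply mul_left_cancel₀ hΔ0
  linear_combination (Δ * Y ^ 2) * hC + (G₁ x * G₂ x * G₃ x) * hChat
    + (G₁ x * L₁ X) * (G₂ x * L₂ X) * h3 - (G₁ x * L₁ X) * (Δ * (x - X) ^ 2) * hcorr
end

section
/- Let K be a field of characteristic zero containing an element i with i² = −1, and let H, I₂ ∈ K. Suppose x, u, ξ, η ∈ K satisfy the equation of C₂: u² = x(x² + 2Hx + I₂/4)(x² + 2Hx + I₂/4 − 1), the equation of Kowalewski's curve C₁: η² = 2ξ((ξ − H)² + 1 − I₂/4)((ξ − H)² − I₂/4), and the correspondence equation −2ξx + (x² + 2Hx + I₂/4)((ξ − H)² + 1 − I₂/4) = 0. Then (uη)² = −(2ξx(x − ξ + H))², i.e. uη = ± 2i·ξx(x − ξ + H). -/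
/-- The (2,2)-correspondence between the curve `C₂` of
Bobenko–Reyman–Semenov-Tian-Shansky and Kowalewski's curve `C₁`: on the
locus of the correspondence equation, `(uη)² = −(2ξx(x − ξ + H))²`,
i.e. `uη = ± 2i ξx(x − ξ + H)`. -/
theorem C₂_C₁_correspondence
    (K : Type*) [Field K] [CharZero K]
    (i : K) (hi : i ^ 2 = -1)
    (H I₂ : K) (x u ξ η : K)
    (hC₂ : u ^ 2 = x * (x ^ 2 + 2 * H * x + I₂ / 4) * (x ^ 2 + 2 * H * x + I₂ / 4 - 1))
    (hC₁ : η ^ 2 = 2 * ξ * ((ξ - H) ^ 2 + 1 - I₂ / 4) * ((ξ - H) ^ 2 - I₂ / 4))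
    (hcorr : -2 * ξ * x + (x ^ 2 + 2 * H * x + I₂ / 4) * ((ξ - H) ^ 2 + 1 - I₂ / 4) = 0) :
    (u * η) ^ 2 = -(2 * ξ * x * (x - ξ + H)) ^ 2 := by
  rw [mul_pow, hC₂, hC₁]
  linear_combination (2 * ξ * x) *
    ((x ^ 2 + 2 * H * x + I₂ / 4) * ((ξ - H) ^ 2 + 1 - I₂ / 4) + 2 * ξ * x + 1
      - (x ^ 2 + 2 * H * x + I₂ / 4) - ((ξ - H) ^ 2 + 1 - I₂ / 4)) * hcorr
end

section
/- Let K be a field of characteristic zero, H, I₂ ∈ K, and let G₁(x) = x, G₂(x) = x² + 2Hx + I₂/4, G₃(x) = x² + 2Hx + I₂/4 − 1, with Richelot brackets L₁ = [G₂,G₃] = −2(X + H), L₂ = [G₃,G₁] = X² + 1 − I₂/4, L₃ = [G₁,G₂] = −X² + I₂/4 (where [G,G̃] := G'G̃ − G G̃'). Then for all x, X ∈ K: G₁(x)L₁(X) + G₂(x)L₂(X) + G₃(x)L₃(X) = (x − X)². Consequently, whenever G₁(x)L₁(X) + G₂(x)L₂(X) = 0, one has G₃(x)·L₃(X) = (x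 − X)², and hence (G₁G₂G₃)(x)·(L₁L₂L₃)(X) = −(G₁(x)L₁(X)(x − X))². -/
/-- Richelot's bilinear identity specialized to the curve `C₂` of the
Kowalewski top: with `G₁(x) = x`, `G₂(x) = x² + 2Hx + I₂/4`, `G₃ = G₂ − 1`
and brackets `L₁(X) = −2(X + H)`, `L₂(X) = X² + 1 − I₂/4`, `L₃(X) = −X² + I₂/4`,
one has `G₁(x)L₁(X) + G₂(x)L₂(X) + G₃(x)L₃(X) = (x − X)²`; consequently, on the
correspondence locus `G₁(x)L₁(X) + G₂(x)L₂(X) = 0` one gets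
`G₃(x)L₃(X) = (x − X)²` and
`(G₁G₂G₃)(x)·(L₁L₂L₃)(X) = −(G₁(x)L₁(X)(x − X))²`. -/
theorem richelot_identity_for_C₂
    (K : Type*) [Field K] [CharZero K] (H I₂ : K)
    (G₁ G₂ G₃ L₁ L₂ L₃ : K → K)
    (hG₁ : ∀ x, G₁ x = x)
    (hG₂ : ∀ x, G₂ x = x ^ 2 + 2 * H * x + I₂ / 4)
    (hG₃ : ∀ x, G₃ x = x ^ 2 + 2 * H * x + I₂ / 4 - 1)
    (hL₁ : ∀ X, L₁ X = -2 * (X + H))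
    (hL₂ : ∀ X, L₂ X = X ^ 2 + 1 - I₂ / 4)
    (hL₃ : ∀ X, L₃ X = -X ^ 2 + I₂ / 4) :
    (∀ x X : K, G₁ x * L₁ X + G₂ x * L₂ X + G₃ x * L₃ X = (x - X) ^ 2) ∧
    (∀ x X : K, G₁ x * L₁ X + G₂ x * L₂ X = 0 →
      G₃ x * L₃ X = (x - X) ^ 2 ∧
      (G₁ x * G₂ x * G₃ x) * (L₁ X * L₂ X * L₃ X)
        = -(G₁ x * L₁ X * (x - X)) ^ 2) := by
  have key : ∀ x X : K, G₁ x * L₁ X + G₂ x * L₂ X + G₃ x * L₃ X = (x - X) ^ 2 := by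
    intro x X
    rw [hG₁, hG₂, hG₃, hL₁, hL₂, hL₃]
    ring
  refine ⟨key, fun x X h => ?_⟩
  have h3 : G₃ x * L₃ X = (x - X) ^ 2 := by
    linear_combination key x X - h
  refine ⟨h3, ?_⟩
  linear_combination (G₁ x * L₁ X * (G₃ x * L₃ X)) * h - (G₁ x * L₁ X) ^ 2 * h3
end
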